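/- arXiv:2305.09339 — 4 statements merged into one kernel-verified Lean document; each statement's English description precedes it below -/
import Mathlib

section
/- Let ν > 0, and let ρ : ℝ × ℝ³ → ℝ and u : ℝ × ℝ³ → ℝ³ be C² functions with ρ > 0 everywhere, satisfying the continuity equation ∂_t ρ + div(ρ u) = 0. Define the drift velocity v = 2ν ∇(log ρ) (spatial gradient). Then the 'augmented velocity' equation for v holds pointwise: ∂_t(ρ v) + div(ρ v ⊗ u) + 2ν div(ρ ∇ᵀu) = 0, where ∇ᵀu is the transposed Jacobian, (∇ᵀu)_{ij} = ∂_i u_j. -/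
open scoped BigOperators
open MeasureTheory

noncomputable section

/-- Points of `ℝ³`, realized as `Fin 3 → ℝ`. -/
abbrev V3 : Type := Fin 3 → ℝ

/-- Partial derivative `∂ᵢ f` of a scalar field. -/
def pd (i : Fin 3) (f : V3 → ℝ) (x : V3) : ℝ := fderiv ℝ f x (Pi.single i 1)

/-- Gradient `∇f` of a scalar field. -/
def grad (f : V3 → ℝ) (x : V3) : V3 := fun i => pd i f x

/-- Divergence `div u` of a vector field. -/
def vdiv (u : V3 → V3) (x : V3) : ℝ := ∑ i, pd i (fun y => u y i) x

/-- Laplacian `Δf` of a scalar field. -/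
def lap (f : V3 → ℝ) (x : V3) : ℝ := ∑ i, pd i (fun y => pd i f y) x

/-- Divergence (row-wise) of a matrix field: `(div M)_i = ∑_j ∂_j M_{ij}`. -/
def mdiv (M : V3 → Fin 3 → Fin 3 → ℝ) (x : V3) : V3 :=
  fun i => ∑ j, pd j (fun y => M y i j) x

/-- Jacobian matrix `(∇u)_{ij} = ∂_j u_i` of a vector field. -/
def jacb (u : V3 → V3) (x : V3) : Fin 3 → Fin 3 → ℝ := fun i j => pd j (fun y => u y i) x

/-- Symmetric part `Du = (∇u + ∇ᵀu)/2` of the Jacobian. -/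
def symJ (u : V3 → V3) (x : V3) : Fin 3 → Fin 3 → ℝ :=
  fun i j => (jacb u x i j + jacb u x j i) / 2

/-- Antisymmetric part `Au = (∇u − ∇ᵀu)/2` of the Jacobian. -/
def asymJ (u : V3 → V3) (x : V3) : Fin 3 → Fin 3 → ℝ :=
  fun i j => (jacb u x i j - jacb u x j i) / 2

/-- Euclidean dot product on `ℝ³`. -/
def dot (a b : V3) : ℝ := ∑ i, a i * b i

/-- Squared Euclidean norm on `ℝ³`. -/
def normSq (a : V3) : ℝ := ∑ i, (a i) ^ 2

/-!
In spacetime, `∂ₜ` and `∂ⱼ` are derivatives along constant directions, so the continuity equation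
`∂ₜρ + ∑ⱼ ∂ⱼ(ρ uⱼ) = 0` can be differentiated in any direction `w`: second derivatives commute and
`∂_w (ρ uⱼ) = (∂_w ρ) uⱼ + ρ ∂_w uⱼ`, whence `∂ₜ ∂_w ρ + ∑ⱼ ∂ⱼ((∂_w ρ) uⱼ) + ∑ⱼ ∂ⱼ(ρ ∂_w uⱼ) = 0`.
Since `ρ ∇ log ρ = ∇ρ`, the momentum `ρ v` is `2ν ∇ρ`, and `2ν` times this identity is the
augmented equation.
-/

open Filter Topology

section FrameDivergence

variable {𝕜 E ι : Type*} [NontriviallyNormedField 𝕜] [NormedAddCommGroup E] [NormedSpace 𝕜 E]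
  [Fintype ι] {e : ι → E} {u u' : E → ι → 𝕜} {x : E}

/-- The divergence `∑ⱼ ∂_{eⱼ} uⱼ` of the field `∑ⱼ uⱼ eⱼ` with coefficients `u` along a family `e`
of constant vectors. The family need not be a basis: the spatial divergence is then also the one in
spacetime along the vectors `(0, eⱼ)`. -/
def frameDiv (e : ι → E) (u : E → ι → 𝕜) (x : E) : 𝕜 :=
  ∑ j, fderiv 𝕜 (fun y => u y j) x (e j)

theorem frameDiv_congr (h : u =ᶠ[𝓝 x] u') : frameDiv e u x = frameDiv e u' x :=
  Finset.sum_congr rfl fun j _ => by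
    have hj : (fun y => u y j) =ᶠ[𝓝 x] fun y => u' y j := h.fun_comp (· j)
    rw [hj.fderiv_eq]

theorem frameDiv_add (hu : DifferentiableAt 𝕜 u x) (hu' : DifferentiableAt 𝕜 u' x) :
    frameDiv e (fun y => u y + u' y) x = frameDiv e u x + frameDiv e u' x := by
  rw [differentiableAt_pi] at hu hu'
  simp only [frameDiv, Pi.add_apply, ← Finset.sum_add_distrib]
  exact Finset.sum_congr rfl fun j _ => by rw [fderiv_fun_add (hu j) (hu' j), add_apply]

theorem frameDiv_const_smul (c : 𝕜) : frameDiv e (fun y => c • u y) x = c * frameDiv e u x := by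
  simp only [frameDiv, Finset.mul_sum]
  refine Finset.sum_congr rfl fun j _ => ?_
  have hj : fderiv 𝕜 (fun y => (c • u y) j) = c • fderiv 𝕜 fun y => u y j :=
    fderiv_const_smul_field c
  rw [hj, Pi.smul_apply, smul_apply, smul_eq_mul]

end FrameDivergence

section Slices

variable {𝕜 E F ι : Type*} [NontriviallyNormedField 𝕜] [NormedAddCommGroup E] [NormedSpace 𝕜 E]
  [NormedAddCommGroup F] [NormedSpace 𝕜 F] [Fintype ι] {t : 𝕜} {x : E}

theorem differentiableAt_slice {f : 𝕜 × E → F} (hf : DifferentiableAt 𝕜 f (t, x)) :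
    DifferentiableAt 𝕜 (fun y => f (t, y)) x :=
  (hf.hasFDerivAt.comp x (hasFDerivAt_prodMk_right t x)).differentiableAt

theorem fderiv_slice_apply {f : 𝕜 × E → F} (hf : DifferentiableAt 𝕜 f (t, x)) (w : E) :
    fderiv 𝕜 (fun y => f (t, y)) x w = fderiv 𝕜 f (t, x) (0, w) :=
  congrArg (· w) (hf.hasFDerivAt.comp x (hasFDerivAt_prodMk_right t x)).fderiv

theorem deriv_slice {f : 𝕜 × E → F} (hf : DifferentiableAt 𝕜 f (t, x)) :
    deriv (fun s => f (s, x)) t = fderiv 𝕜 f (t, x) (1, 0) :=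
  (hf.hasFDerivAt.comp_hasDerivAt t ((hasDerivAt_id t).prodMk (hasDerivAt_const t x))).deriv

theorem deriv_slice_of_eventuallyEq {f g : 𝕜 × E → F} (h : f =ᶠ[𝓝 (t, x)] g)
    (hg : DifferentiableAt 𝕜 g (t, x)) :
    deriv (fun s => f (s, x)) t = fderiv 𝕜 g (t, x) (1, 0) := by
  rw [deriv_slice (hg.congr_of_eventuallyEq h), h.fderiv_eq]

theorem frameDiv_slice {e : ι → E} {u : 𝕜 × E → ι → 𝕜} (hu : DifferentiableAt 𝕜 u (t, x)) :
    frameDiv e (fun y => u (t, y)) x = frameDiv (fun j => ((0 : 𝕜), e j)) u (t, x) :=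
  Finset.sum_congr rfl fun j _ => fderiv_slice_apply (differentiableAt_pi.1 hu j) (e j)

theorem frameDiv_slice_of_eventuallyEq {e : ι → E} {u u' : 𝕜 × E → ι → 𝕜}
    (h : u =ᶠ[𝓝 (t, x)] u') (hu' : DifferentiableAt 𝕜 u' (t, x)) :
    frameDiv e (fun y => u (t, y)) x = frameDiv (fun j => ((0 : 𝕜), e j)) u' (t, x) := by
  rw [frameDiv_slice (hu'.congr_of_eventuallyEq h), frameDiv_congr h]

end Slices

section SecondDerivatives

variable {𝕜 E F ι : Type*} [RCLike 𝕜] [NormedAddCommGroup E] [NormedSpace 𝕜 E]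
  [NormedAddCommGroup F] [NormedSpace 𝕜 F] [Fintype ι]
  {e : ι → E} {r : E → 𝕜} {u : E → ι → 𝕜} {x : E}

theorem differentiableAt_fderiv_apply {f : E → F} (hf : ContDiffAt 𝕜 2 f x) (w : E) :
    DifferentiableAt 𝕜 (fun y => fderiv 𝕜 f y w) x :=
  ((hf.fderiv_right (m := 1) le_rfl).differentiableAt one_ne_zero).clm_apply
    (differentiableAt_const w)

theorem fderiv_fderiv_apply_comm {f : E → F} (hf : ContDiffAt 𝕜 2 f x) (v w : E) :
    fderiv 𝕜 (fun y => fderiv 𝕜 f y v) x w = fderiv 𝕜 (fun y => fderiv 𝕜 f y w) x v := by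
  have hf' : DifferentiableAt 𝕜 (fderiv 𝕜 f) x :=
    (hf.fderiv_right (m := 1) le_rfl).differentiableAt one_ne_zero
  have hcomm := (hf.isSymmSndFDerivAt (by simp)).eq w v
  simpa [fderiv_clm_apply hf' (differentiableAt_const _)] using hcomm

theorem differentiableAt_frameDiv (hu : ContDiffAt 𝕜 2 u x) :
    DifferentiableAt 𝕜 (frameDiv e u) x :=
  DifferentiableAt.fun_sum fun j _ => differentiableAt_fderiv_apply (contDiffAt_pi.1 hu j) (e j)

theorem fderiv_frameDiv_apply (hu : ContDiffAt 𝕜 2 u x) (w : E) :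
    fderiv 𝕜 (frameDiv e u) x w = frameDiv e (fun y j => fderiv 𝕜 (fun z => u z j) y w) x := by
  rw [contDiffAt_pi] at hu
  change fderiv 𝕜 (fun y => ∑ j, fderiv 𝕜 (fun z => u z j) y (e j)) x w = _
  rw [fderiv_fun_sum fun j _ => differentiableAt_fderiv_apply (hu j) (e j), sum_apply]
  exact Finset.sum_congr rfl fun j _ => fderiv_fderiv_apply_comm (hu j) (e j) w

theorem frameDiv_slice_mul_fderiv {t : 𝕜} {r : 𝕜 × E → 𝕜} {u : 𝕜 × E → ι → 𝕜}
    (hr : DifferentiableAt 𝕜 r (t, x)) (hu : ContDiffAt 𝕜 2 u (t, x)) (w : E) :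
    frameDiv e (fun y j => r (t, y) * fderiv 𝕜 (fun z => u (t, z) j) y w) x
      = frameDiv (fun j => ((0 : 𝕜), e j))
          (fun p j => r p * fderiv 𝕜 (fun q => u q j) p (0, w)) (t, x) := by
  refine frameDiv_slice_of_eventuallyEq
    (u := fun p j => r p * fderiv 𝕜 (fun z => u (p.1, z) j) p.2 w)
    ((hu.eventually (by simp)).mono fun p hp => funext fun j => ?_)
    (differentiableAt_pi.2 fun j => hr.fun_mul
      (differentiableAt_fderiv_apply (contDiffAt_pi.1 hu j) (0, w)))
  exact congrArg (r p * ·)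
    (fderiv_slice_apply (differentiableAt_pi.1 (hp.differentiableAt two_ne_zero) j) w)

theorem fderiv_frameDiv_smul_apply (hr : ContDiffAt 𝕜 2 r x) (hu : ContDiffAt 𝕜 2 u x) (w : E) :
    fderiv 𝕜 (frameDiv e fun y => r y • u y) x w
      = frameDiv e (fun y j => fderiv 𝕜 r y w * u y j) x
        + frameDiv e (fun y j => r y * fderiv 𝕜 (fun z => u z j) y w) x := by
  have hleibniz : ∀ᶠ y in 𝓝 x, (fun j => fderiv 𝕜 (fun z => r z * u z j) y w)
      = (fun j => fderiv 𝕜 r y w * u y j) + fun j => r y * fderiv 𝕜 (fun z => u z j) y w := by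
    filter_upwards [hr.eventually (by simp), hu.eventually (by simp)] with y hry huy
    funext j
    have hrd := hry.differentiableAt two_ne_zero
    have hud := differentiableAt_pi.1 (huy.differentiableAt two_ne_zero) j
    simp [fderiv_fun_mul hrd hud, mul_comm, add_comm]
  have hud := differentiableAt_pi.1 (hu.differentiableAt two_ne_zero)
  calc
    _ = frameDiv e (fun y j => fderiv 𝕜 (fun z => r z * u z j) y w) x :=
      fderiv_frameDiv_apply (hr.smul hu) w
    _ = frameDiv e (fun y => (fun j => fderiv 𝕜 r y w * u y j)
          + fun j => r y * fderiv 𝕜 (fun z => u z j) y w) x := frameDiv_congr hleibniz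
    _ = _ := frameDiv_add
      (differentiableAt_pi.2 fun j => (differentiableAt_fderiv_apply hr w).fun_mul (hud j))
      (differentiableAt_pi.2 fun j => (hr.differentiableAt two_ne_zero).fun_mul
        (differentiableAt_fderiv_apply (contDiffAt_pi.1 hu j) w))

theorem fderiv_continuity_equation {τ : E} (hr : ContDiffAt 𝕜 2 r x) (hu : ContDiffAt 𝕜 2 u x)
    (hcont : ∀ᶠ y in 𝓝 x, fderiv 𝕜 r y τ + frameDiv e (fun z => r z • u z) y = 0) (w : E) :
    fderiv 𝕜 (fun y => fderiv 𝕜 r y w) x τ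
      + frameDiv e (fun y j => fderiv 𝕜 r y w * u y j) x
      + frameDiv e (fun y j => r y * fderiv 𝕜 (fun z => u z j) y w) x = 0 := by
  have hdiv : DifferentiableAt 𝕜 (frameDiv e fun y => r y • u y) x :=
    differentiableAt_frameDiv (hr.smul hu)
  have hzero : fderiv 𝕜 (fun y => fderiv 𝕜 r y τ + frameDiv e (fun z => r z • u z) y) x = 0 :=
    (EventuallyEq.fderiv_eq hcont).trans (fderiv_const_apply 0)
  rw [add_assoc, ← fderiv_frameDiv_smul_apply hr hu w, fderiv_fderiv_apply_comm hr w τ,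
    ← add_apply, ← fderiv_fun_add (differentiableAt_fderiv_apply hr τ) hdiv, hzero, zero_apply]

end SecondDerivatives

section DriftVelocity

variable {E ι : Type*} [NormedAddCommGroup E] [NormedSpace ℝ E] [Fintype ι]

/-- The drift velocity `2ν ∇ log ρ` of the density `ρ`, as the covector `2ν d(log ρ)`: its
components are its values on the basis vectors, and no inner product is needed. -/
def driftCovector (ν : ℝ) (ρ : E → ℝ) (x : E) : E →L[ℝ] ℝ :=
  (2 * ν) • fderiv ℝ (fun y => Real.log (ρ y)) x

theorem mul_driftCovector_apply (ν : ℝ) {ρ : E → ℝ} {x : E} (hρ : DifferentiableAt ℝ ρ x)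
    (h0 : ρ x ≠ 0) (w : E) : ρ x * driftCovector ν ρ x w = 2 * ν * fderiv ℝ ρ x w := by
  rw [driftCovector, fderiv.log hρ h0]
  simp only [smul_apply, smul_eq_mul]
  field_simp

theorem eventually_mul_driftCovector_apply (ν : ℝ) {ρ : ℝ → E → ℝ} {t : ℝ} {x : E}
    (hρ : ContDiffAt ℝ 1 (fun p : ℝ × E => ρ p.1 p.2) (t, x)) (h0 : ρ t x ≠ 0) (w : E) :
    ∀ᶠ p in 𝓝 (t, x), ρ p.1 p.2 * driftCovector ν (ρ p.1) p.2 w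
      = 2 * ν * fderiv ℝ (fun q : ℝ × E => ρ q.1 q.2) p (0, w) := by
  filter_upwards [hρ.eventually (by simp), hρ.continuousAt.eventually_ne h0] with p hp hp0
  have hd := hp.differentiableAt one_ne_zero
  rw [← fderiv_slice_apply hd w]
  exact mul_driftCovector_apply ν (differentiableAt_slice hd) hp0 w

theorem eventually_spacetime_continuity_equation {e : ι → E} {ρ : ℝ → E → ℝ}
    {u : ℝ → E → ι → ℝ} {t : ℝ} {x : E}
    (hρ : ContDiffAt ℝ 1 (fun p : ℝ × E => ρ p.1 p.2) (t, x))
    (hu : ContDiffAt ℝ 1 (fun p : ℝ × E => u p.1 p.2) (t, x))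
    (hcont : ∀ᶠ p in 𝓝 (t, x), deriv (fun s => ρ s p.2) p.1
      + frameDiv e (fun y => ρ p.1 y • u p.1 y) p.2 = 0) :
    ∀ᶠ p in 𝓝 (t, x), fderiv ℝ (fun q : ℝ × E => ρ q.1 q.2) p (1, 0)
      + frameDiv (fun j => ((0 : ℝ), e j)) (fun q : ℝ × E => ρ q.1 q.2 • u q.1 q.2) p = 0 := by
  filter_upwards [hcont, hρ.eventually (by simp), hu.eventually (by simp)] with p hp hρp hup
  have hρd := hρp.differentiableAt one_ne_zero
  have hud := hup.differentiableAt one_ne_zero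
  rw [← deriv_slice hρd, ← frameDiv_slice (hρd.fun_smul hud)]
  exact hp

theorem augmented_drift_equation_general (ν : ℝ) {e : ι → E} {ρ : ℝ → E → ℝ}
    {u : ℝ → E → ι → ℝ} {t : ℝ} {x : E}
    (hρ : ContDiffAt ℝ 2 (fun p : ℝ × E => ρ p.1 p.2) (t, x))
    (hu : ContDiffAt ℝ 2 (fun p : ℝ × E => u p.1 p.2) (t, x))
    (hpos : 0 < ρ t x)
    (hcont : ∀ᶠ p in 𝓝 (t, x), deriv (fun s => ρ s p.2) p.1
      + frameDiv e (fun y => ρ p.1 y • u p.1 y) p.2 = 0)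
    (w : E) :
    deriv (fun s => ρ s x * driftCovector ν (ρ s) x w) t
      + frameDiv e (fun y j => ρ t y * driftCovector ν (ρ t) y w * u t y j) x
      + 2 * ν * frameDiv e (fun y j => ρ t y * fderiv ℝ (fun z => u t z j) y w) x = 0 := by
  set r : ℝ × E → ℝ := fun p => ρ p.1 p.2
  set U : ℝ × E → ι → ℝ := fun p => u p.1 p.2
  let e' : ι → ℝ × E := fun j => (0, e j)
  have hr' := differentiableAt_fderiv_apply hρ (0, w)
  have hmomentum := eventually_mul_driftCovector_apply ν (hρ.of_le one_le_two) hpos.ne' w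
  have htime : deriv (fun s => ρ s x * driftCovector ν (ρ s) x w) t
      = 2 * ν * fderiv ℝ (fun p => fderiv ℝ r p (0, w)) (t, x) (1, 0) := by
    rw [deriv_slice_of_eventuallyEq hmomentum (hr'.const_mul _), fderiv_const_mul hr', smul_apply,
      smul_eq_mul]
  have hflux : frameDiv e (fun y j => ρ t y * driftCovector ν (ρ t) y w * u t y j) x
      = 2 * ν * frameDiv e' (fun p j => fderiv ℝ r p (0, w) * U p j) (t, x) := by
    rw [← frameDiv_const_smul]
    refine frameDiv_slice_of_eventuallyEq
      (u := fun p j => ρ p.1 p.2 * driftCovector ν (ρ p.1) p.2 w * u p.1 p.2 j)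
      (hmomentum.mono fun p hp => funext fun j => ?_)
      ((hr'.fun_smul (hu.differentiableAt two_ne_zero)).const_smul (2 * ν))
    exact (congrArg (· * u p.1 p.2 j) hp).trans (mul_assoc _ _ _)
  have hjacobian := frameDiv_slice_mul_fderiv (e := e) (hρ.differentiableAt two_ne_zero) hu w
  have hspacetime := eventually_spacetime_continuity_equation (hρ.of_le one_le_two)
    (hu.of_le one_le_two) hcont
  rw [htime, hflux, hjacobian]
  linear_combination 2 * ν * fderiv_continuity_equation hρ hu hspacetime (0, w)

end DriftVelocity

/-- the drift velocity `v = 2ν ∇ log ρ` satisfies the augmented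
equation `∂ₜ(ρv) + div(ρ v ⊗ u) + 2ν div(ρ ∇ᵀu) = 0`. -/
theorem augmented_drift_equation
    (ν : ℝ) (hν : 0 < ν)
    (ρ : ℝ → V3 → ℝ) (u : ℝ → V3 → V3)
    (hρ : ContDiff ℝ 2 (fun p : ℝ × V3 => ρ p.1 p.2))
    (hu : ContDiff ℝ 2 (fun p : ℝ × V3 => u p.1 p.2))
    (hpos : ∀ t x, 0 < ρ t x)
    (hcont : ∀ t x, deriv (fun s => ρ s x) t + vdiv (fun y => ρ t y • u t y) x = 0)
    (v : ℝ → V3 → V3)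
    (hv : ∀ t x, v t x = (2 * ν) • grad (fun y => Real.log (ρ t y)) x) :
    ∀ t x,
      (fun i => deriv (fun s => ρ s x * v s x i) t)
        + mdiv (fun y i j => ρ t y * v t y i * u t y j) x
        + (2 * ν) • mdiv (fun y i j => ρ t y * jacb (u t) y j i) x
      = 0 := by
  intro t x
  ext i
  rw [show v = fun s y => (2 * ν) • grad (fun z => Real.log (ρ s z)) y from funext₂ hv]
  exact augmented_drift_equation_general ν hρ.contDiffAt hu.contDiffAt (hpos t x)
    (.of_forall fun p => hcont p.1 p.2) (Pi.single i 1)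
end
end

section
/- Let γ > 1 and set p(s) = s^γ for s > 0. Let ρ, r : Ω → ℝ be C¹ functions on an open set Ω ⊆ ℝ³ with ρ > 0 and r > 0 everywhere. Then the following pointwise identity holds on Ω: ρ (p'(ρ) ∇log ρ − p'(r) ∇log r) · (∇log ρ − ∇log r) = ρ p'(ρ) |∇log ρ − ∇log r|² + ∇[p(ρ) − p(r) − p'(r)(ρ − r)] · ∇log r − [ρ (p'(ρ) − p'(r)) − r p''(r)(ρ − r)] |∇log r|². -/
open scoped BigOperators
open MeasureTheory

noncomputable section

/-!
By the chain rule, `∇[p(ρ) - p(r) - p'(r) (ρ - r)] = (p'(ρ) - p'(r)) ∇ρ - p''(r) (ρ - r) ∇r`.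
Substituting `∇ρ = ρ ∇log ρ` and `∇r = r ∇log r` turns both sides into quadratic expressions in
`a = ∇log ρ` and `b = ∇log r`, and the identity reduces to
`(c a - d b) · (a - b) = c |a - b|² + (c - d) (a · b - |b|²)` with `c = p'(ρ)`, `d = p'(r)`.
The last identity holds for every symmetric bilinear form, so the argument applies to differentials,
with a symmetric bilinear form on the dual space in place of the dot product of gradients.
-/

section RelativePressure

/-- The relative pressure `p(s) - p(t) - p'(t) (s - t)`: the remainder at `s` of the first-order
Taylor expansion of `p` at `t`. The derivative is the separate argument `p'`, so that an explicit
formula for it can be supplied. -/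
def relativePressure (p p' : ℝ → ℝ) (s t : ℝ) : ℝ := p s - p t - p' t * (s - t)

variable {E : Type*} [NormedAddCommGroup E] [NormedSpace ℝ E] {p p' : ℝ → ℝ} {ρ r : E → ℝ} {x : E}

theorem fderiv_eq_smul_fderiv_log (hρ : DifferentiableAt ℝ ρ x) (hρx : ρ x ≠ 0) :
    fderiv ℝ ρ x = ρ x • fderiv ℝ (fun y => Real.log (ρ y)) x := by
  rw [fderiv.log hρ hρx, smul_inv_smul₀ hρx]

theorem hasFDerivAt_relativePressure {p''r : ℝ} {ρ' r' : StrongDual ℝ E}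
    (hpρ : HasDerivAt p (p' (ρ x)) (ρ x)) (hpr : HasDerivAt p (p' (r x)) (r x))
    (hp'r : HasDerivAt p' p''r (r x)) (hρ : HasFDerivAt ρ ρ' x) (hr : HasFDerivAt r r' x) :
    HasFDerivAt (fun y => relativePressure p p' (ρ y) (r y))
      ((p' (ρ x) - p' (r x)) • ρ' - (p''r * (ρ x - r x)) • r') x := by
  have hlinear := (hp'r.comp_hasFDerivAt x hr).mul (hρ.sub hr)
  refine (((hpρ.comp_hasFDerivAt x hρ).sub (hpr.comp_hasFDerivAt x hr)).sub hlinear).congr_fderiv ?_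
  simp only [Function.comp_apply, Pi.sub_apply]
  module

theorem fderiv_relativePressure_eq_fderiv_log {p'' : ℝ → ℝ}
    (hp : ∀ s > 0, HasDerivAt p (p' s) s) (hp' : ∀ s > 0, HasDerivAt p' (p'' s) s)
    (hρ : DifferentiableAt ℝ ρ x) (hr : DifferentiableAt ℝ r x) (hρx : 0 < ρ x) (hrx : 0 < r x) :
    fderiv ℝ (fun y => relativePressure p p' (ρ y) (r y)) x
      = (ρ x * (p' (ρ x) - p' (r x))) • fderiv ℝ (fun y => Real.log (ρ y)) x
        - (r x * p'' (r x) * (ρ x - r x)) • fderiv ℝ (fun y => Real.log (r y)) x := by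
  rw [(hasFDerivAt_relativePressure (hp _ hρx) (hp _ hrx) (hp' _ hrx) hρ.hasFDerivAt
      hr.hasFDerivAt).fderiv,
    fderiv_eq_smul_fderiv_log hρ hρx.ne', fderiv_eq_smul_fderiv_log hr hrx.ne']
  module

theorem bilin_smul_sub_smul_sub {R M : Type*} [CommRing R] [AddCommGroup M] [Module R M]
    {B : LinearMap.BilinForm R M} (hB : B.IsSymm) (c d : R) (u v : M) :
    B (c • u - d • v) (u - v) = c * B (u - v) (u - v) + (c - d) * (B u v - B v v) := by
  have hdecomp : c • u - d • v = c • (u - v) + (c - d) • v := by module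
  rw [hdecomp, LinearMap.BilinForm.add_left, LinearMap.BilinForm.smul_left,
    LinearMap.BilinForm.smul_left, hB.eq v (u - v), LinearMap.BilinForm.sub_left u v v]

theorem pressure_gradient_identity_general {B : LinearMap.BilinForm ℝ (StrongDual ℝ E)}
    (hB : B.IsSymm) {p'' : ℝ → ℝ}
    (hp : ∀ s > 0, HasDerivAt p (p' s) s) (hp' : ∀ s > 0, HasDerivAt p' (p'' s) s)
    (hρ : DifferentiableAt ℝ ρ x) (hr : DifferentiableAt ℝ r x) (hρx : 0 < ρ x) (hrx : 0 < r x) :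
    ρ x * B
        (p' (ρ x) • fderiv ℝ (fun y => Real.log (ρ y)) x
          - p' (r x) • fderiv ℝ (fun y => Real.log (r y)) x)
        (fderiv ℝ (fun y => Real.log (ρ y)) x - fderiv ℝ (fun y => Real.log (r y)) x)
      = ρ x * p' (ρ x)
          * B (fderiv ℝ (fun y => Real.log (ρ y)) x - fderiv ℝ (fun y => Real.log (r y)) x)
              (fderiv ℝ (fun y => Real.log (ρ y)) x - fderiv ℝ (fun y => Real.log (r y)) x)
        + B (fderiv ℝ (fun y => relativePressure p p' (ρ y) (r y)) x)
            (fderiv ℝ (fun y => Real.log (r y)) x)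
        - (ρ x * (p' (ρ x) - p' (r x)) - r x * p'' (r x) * (ρ x - r x))
          * B (fderiv ℝ (fun y => Real.log (r y)) x) (fderiv ℝ (fun y => Real.log (r y)) x) := by
  rw [bilin_smul_sub_smul_sub hB, fderiv_relativePressure_eq_fderiv_log hp hp' hρ hr hρx hrx,
    LinearMap.BilinForm.sub_left (_ • _), LinearMap.BilinForm.smul_left,
    LinearMap.BilinForm.smul_left]
  ring

end RelativePressure

theorem hasDerivAt_const_mul_rpow_sub_one (c γ : ℝ) {s : ℝ} (hs : s ≠ 0) :
    HasDerivAt (fun t : ℝ => c * t ^ (γ - 1)) (c * (γ - 1) * s ^ (γ - 2)) s := by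
  have h := (Real.hasDerivAt_rpow_const (p := γ - 1) (Or.inl hs)).const_mul c
  rwa [← mul_assoc, show γ - 1 - 1 = γ - 2 by ring] at h

/-- The vector of `ℝ³` whose coordinates are those of a linear functional in the dual basis of the
standard basis; it sends a differential to its gradient. -/
def gradVector : StrongDual ℝ V3 →ₗ[ℝ] V3 where
  toFun φ i := φ (Pi.single i 1)
  map_add' _ _ := rfl
  map_smul' _ _ := rfl

/-- The bilinear form on linear functionals on `ℝ³` induced by the Euclidean dot product. It acts on
functionals because `V3` carries the sup norm, for which Mathlib's `gradient` is not available. -/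
def dualDot : LinearMap.BilinForm ℝ (StrongDual ℝ V3) :=
  (dotProductBilin ℝ ℝ).compl₁₂ gradVector gradVector

theorem isSymm_dualDot : dualDot.IsSymm :=
  ⟨fun φ ψ => dotProduct_comm (gradVector φ) (gradVector ψ)⟩

theorem normSq_eq_dot_self (a : V3) : normSq a = dot a a := by
  simp only [normSq, dot, sq]

/-- pointwise identity for the pressure gradient term of the
relative entropy, with `p(s) = s^γ`. -/
theorem pressure_gradient_identity
    (γ : ℝ) (hγ : 1 < γ)
    (Ω : Set V3) (hΩ : IsOpen Ω)
    (ρ r : V3 → ℝ)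
    (hρ : ContDiffOn ℝ 1 ρ Ω) (hr : ContDiffOn ℝ 1 r Ω)
    (hρpos : ∀ x ∈ Ω, 0 < ρ x) (hrpos : ∀ x ∈ Ω, 0 < r x) :
    ∀ x ∈ Ω,
      ρ x * dot
          (fun i => γ * ρ x ^ (γ - 1) * grad (fun y => Real.log (ρ y)) x i
                  - γ * r x ^ (γ - 1) * grad (fun y => Real.log (r y)) x i)
          (grad (fun y => Real.log (ρ y)) x - grad (fun y => Real.log (r y)) x)
      = ρ x * (γ * ρ x ^ (γ - 1))
            * normSq (grad (fun y => Real.log (ρ y)) x - grad (fun y => Real.log (r y)) x)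
        + dot (grad (fun y => ρ y ^ γ - r y ^ γ - γ * r y ^ (γ - 1) * (ρ y - r y)) x)
              (grad (fun y => Real.log (r y)) x)
        - (ρ x * (γ * ρ x ^ (γ - 1) - γ * r x ^ (γ - 1))
            - r x * (γ * (γ - 1) * r x ^ (γ - 2)) * (ρ x - r x))
          * normSq (grad (fun y => Real.log (r y)) x) := by
  intro x hx
  have hρx := (hρ.contDiffAt (hΩ.mem_nhds hx)).differentiableAt one_ne_zero
  have hrx := (hr.contDiffAt (hΩ.mem_nhds hx)).differentiableAt one_ne_zero
  simp only [normSq_eq_dot_self]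
  -- `dualDot` of two differentials is, by unfolding, `dot` of the corresponding gradients.
  exact pressure_gradient_identity_general isSymm_dualDot
    (fun s hs => Real.hasDerivAt_rpow_const (Or.inl hs.ne'))
    (fun s hs => hasDerivAt_const_mul_rpow_sub_one γ γ hs.ne') hρx hrx (hρpos x hx) (hrpos x hx)
end
end

section
/- Let γ > 1, p(s) = s^γ, H(s) = s^γ/(γ−1), and H(ρ|r) = H(ρ) − H(r) − H'(r)(ρ − r). Then for every 0 < a ≤ b there exists a constant C > 0 such that for all r ∈ [a,b] and all ρ ≥ 0: |ρ (p'(ρ) − p'(r)) − r p''(r)(ρ − r)| ≤ C · H(ρ|r). -/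
/-!
For any differentiable `g`, the expression `ρ (g ρ - g r) - r g'(r) (ρ - r)` is the error at `ρ` of
the tangent line at `r` to `s ↦ s g(s)`. With `g = p'` one has `s p'(s) = γ s ^ γ = γ (γ - 1) H(s)`,
so the quantity to be estimated is exactly `γ (γ - 1) H(ρ|r)`, which is nonnegative because `H` is
convex.
-/

open scoped BigOperators
open MeasureTheory

noncomputable section

section RelativeEntropy

variable {f g : ℝ → ℝ} {x y : ℝ}

/-- The relative entropy `f(x|y)`, i.e. the Bregman divergence of `f`: the error at `x` of the
tangent line to `f` at `y`. The slope is `deriv f y`, so it is meaningful only if `f` is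
differentiable at `y`. -/
def relativeEntropy (f : ℝ → ℝ) (x y : ℝ) : ℝ := f x - f y - deriv f y * (x - y)

lemma relativeEntropy_const_mul (c : ℝ) (f : ℝ → ℝ) (x y : ℝ) :
    relativeEntropy (fun s => c * f s) x y = c * relativeEntropy f x y := by
  simp only [relativeEntropy, deriv_const_mul_field]
  ring

lemma relativeEntropy_id_mul (hg : DifferentiableAt ℝ g y) (x : ℝ) :
    relativeEntropy (fun s => s * g s) x y = x * (g x - g y) - y * deriv g y * (x - y) := by
  have hderiv : deriv (fun s => s * g s) y = 1 * g y + y * deriv g y :=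
    ((hasDerivAt_id y).mul hg.hasDerivAt).deriv
  rw [relativeEntropy, hderiv]
  ring

lemma relativeEntropy_nonneg {S : Set ℝ} (hf : ConvexOn ℝ S f) (hx : x ∈ S) (hy : y ∈ S)
    (hfy : DifferentiableAt ℝ f y) : 0 ≤ relativeEntropy f x y := by
  unfold relativeEntropy
  rcases lt_trichotomy x y with hxy | rfl | hyx
  · have hslope := hf.slope_le_deriv hx hy hxy hfy
    rw [slope_def_field, div_le_iff₀ (sub_pos.2 hxy)] at hslope
    linarith
  · simp
  · have hslope := hf.deriv_le_slope hy hx hyx hfy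
    rw [slope_def_field, le_div_iff₀ (sub_pos.2 hyx)] at hslope
    linarith

end RelativeEntropy

section Pressure

/-- The barotropic pressure law `p`, of physical meaning only at densities `s ≥ 0`. -/
def pressure (γ s : ℝ) : ℝ := s ^ γ

/-- The pressure potential `H` of `pressure γ`. It is meaningful only for `γ ≠ 1`. -/
def pressurePotential (γ s : ℝ) : ℝ := s ^ γ / (γ - 1)

variable {γ r : ℝ}

lemma deriv_pressure (γ s : ℝ) : deriv (pressure γ) s = γ * s ^ (γ - 1) :=
  Real.deriv_rpow_const s γ

lemma deriv_deriv_pressure (γ s : ℝ) :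
    deriv (deriv (pressure γ)) s = γ * (γ - 1) * s ^ (γ - 2) := by
  rw [funext (deriv_pressure γ), deriv_const_mul_field, Real.deriv_rpow_const, mul_assoc, sub_sub,
    one_add_one_eq_two]

lemma differentiableAt_deriv_pressure (hr : r ≠ 0) : DifferentiableAt ℝ (deriv (pressure γ)) r := by
  rw [funext (deriv_pressure γ)]
  exact (Real.differentiableAt_rpow_const_of_ne _ hr).const_mul γ

lemma deriv_pressurePotential (γ s : ℝ) :
    deriv (pressurePotential γ) s = γ * s ^ (γ - 1) / (γ - 1) := by
  unfold pressurePotential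
  rw [deriv_div_const, Real.deriv_rpow_const]

lemma differentiableAt_pressurePotential (h : r ≠ 0 ∨ 1 ≤ γ) :
    DifferentiableAt ℝ (pressurePotential γ) r :=
  ((Real.hasDerivAt_rpow_const h).div_const (γ - 1)).differentiableAt

lemma convexOn_pressurePotential (hγ : 1 ≤ γ) :
    ConvexOn ℝ (Set.Ici 0) (pressurePotential γ) := by
  have hscaled := (convexOn_rpow hγ).smul (inv_nonneg.2 (sub_nonneg.2 hγ))
  exact hscaled.congr fun _ _ => inv_mul_eq_div _ _

lemma mul_deriv_pressure (hγ₀ : γ ≠ 0) (hγ₁ : γ ≠ 1) (s : ℝ) :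
    s * deriv (pressure γ) s = γ * (γ - 1) * pressurePotential γ s := by
  have hpow : s * s ^ (γ - 1) = s ^ γ := by
    rcases eq_or_ne s 0 with rfl | hs
    · rw [zero_mul, Real.zero_rpow hγ₀]
    · rw [Real.rpow_sub_one hs, mul_div_cancel₀ _ hs]
  rw [deriv_pressure, mul_left_comm, hpow, pressurePotential, mul_assoc,
    mul_div_cancel₀ _ (sub_ne_zero.2 hγ₁)]

lemma relative_deriv_pressure_eq (hγ₀ : γ ≠ 0) (hγ₁ : γ ≠ 1) (hr : r ≠ 0) (ρ : ℝ) :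
    ρ * (deriv (pressure γ) ρ - deriv (pressure γ) r) - r * deriv (deriv (pressure γ)) r * (ρ - r) =
      γ * (γ - 1) * relativeEntropy (pressurePotential γ) ρ r := by
  rw [← relativeEntropy_id_mul (differentiableAt_deriv_pressure hr), ← relativeEntropy_const_mul]
  simp only [mul_deriv_pressure hγ₀ hγ₁]

lemma relativeEntropy_pressurePotential_nonneg (hγ : 1 ≤ γ) {ρ : ℝ} (hρ : 0 ≤ ρ) (hr : 0 ≤ r) :
    0 ≤ relativeEntropy (pressurePotential γ) ρ r :=
  relativeEntropy_nonneg (convexOn_pressurePotential hγ) hρ hr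
    (differentiableAt_pressurePotential (Or.inr hγ))

end Pressure

theorem relative_pressure_derivative_bound_general {γ r ρ : ℝ} (hγ : 1 < γ) (hr : 0 < r)
    (hρ : 0 ≤ ρ) :
    |ρ * (γ * ρ ^ (γ - 1) - γ * r ^ (γ - 1)) - r * (γ * (γ - 1) * r ^ (γ - 2)) * (ρ - r)| =
      γ * (γ - 1) *
        (ρ ^ γ / (γ - 1) - r ^ γ / (γ - 1) - γ * r ^ (γ - 1) / (γ - 1) * (ρ - r)) := by
  have hγ₀ : 0 < γ := zero_lt_one.trans hγ
  have hcoeff : 0 ≤ γ * (γ - 1) := mul_nonneg hγ₀.le (sub_nonneg.2 hγ.le)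
  have hH := relativeEntropy_pressurePotential_nonneg hγ.le hρ hr.le
  calc
    _ = |γ * (γ - 1) * relativeEntropy (pressurePotential γ) ρ r| := by
      rw [← relative_deriv_pressure_eq hγ₀.ne' hγ.ne' hr.ne', deriv_deriv_pressure, deriv_pressure,
        deriv_pressure]
    _ = γ * (γ - 1) * relativeEntropy (pressurePotential γ) ρ r :=
      abs_of_nonneg (mul_nonneg hcoeff hH)
    _ = _ := by
      simp only [relativeEntropy, deriv_pressurePotential, pressurePotential]

/-- the quantity `ρ(p'(ρ) − p'(r)) − r p''(r)(ρ−r)` is controlled in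
absolute value by the relative entropy `H(ρ|r)`, uniformly for `r ∈ [a,b]`. -/
theorem relative_pressure_derivative_bound
    (γ : ℝ) (hγ : 1 < γ) :
    ∀ a b : ℝ, 0 < a → a ≤ b →
      ∃ C : ℝ, 0 < C ∧
        ∀ r ρ : ℝ, r ∈ Set.Icc a b → 0 ≤ ρ →
          |ρ * (γ * ρ ^ (γ - 1) - γ * r ^ (γ - 1))
              - r * (γ * (γ - 1) * r ^ (γ - 2)) * (ρ - r)|
            ≤ C * (ρ ^ γ / (γ - 1) - r ^ γ / (γ - 1)
                    - (γ * r ^ (γ - 1) / (γ - 1)) * (ρ - r)) :=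
  fun _ _ ha _ => ⟨γ * (γ - 1), mul_pos (zero_lt_one.trans hγ) (sub_pos.2 hγ), fun _ _ hr hρ =>
    (relative_pressure_derivative_bound_general hγ (ha.trans_le hr.1) hρ).le⟩
end
end

section
/- Let ν > 0, κ > 0, γ > 1, T > 0. Let ρ : [0,T] × ℝ³ → ℝ and u : [0,T] × ℝ³ → ℝ³ be smooth (C^∞) functions, ℤ³-periodic in the space variable, with ρ > 0 everywhere, satisfying pointwise the Navier–Stokes–Korteweg system ∂_t ρ + div(ρ u) = 0 and ∂_t(ρ u) + div(ρ u ⊗ u) + ∇(ρ^γ) − 2ν div(ρ Du) − 2κ² ρ ∇(Δρ) = 0. Let w = u + 2ν ∇(log ρ) be the effective velocity and define the BD-entropy F(t) = ∫_{[0,1]³} [ (1/2) ρ |w|² + ρ^γ/(γ−1) + κ² |∇ρ|² ] dx. Then F is differentiable on (0,T) and for every t ∈ (0,T): F'(t) = − 2ν ∫_{[0,1]³} [ ρ |Au|² + γ ρ^{γ−2} |∇ρ|² + 2κ² |Δρ|² ] dx, where |Au|² is the squared Frobenius norm of the antisymmetric part of the gradient of u. -/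
open scoped BigOperators
open MeasureTheory

noncomputable section

/-!
Let `(A u)ᵢⱼ = (∂ⱼ uᵢ - ∂ᵢ uⱼ) / 2`. Taking the gradient of the continuity equation
`(∂ₜ + u · ∇) log ρ = - div u` gives `ρ (∂ₜ + u · ∇) ∇ log ρ = - div (ρ ∇ᵀu)`. Adding `2ν` times
this identity to the momentum equation trades the symmetric part of the stress for its
antisymmetric part: `ρ (∂ₜ + u · ∇) w = - ∇ρ^γ + 2ν div (ρ A u) + 2κ² ρ ∇Δρ` for
`w = u + 2ν ∇ log ρ`. Since `A w = A u`, testing with `w` and integrating by parts yields the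
entropy identity.

Only the Leibniz rule, the commutation of the derivatives and the vanishing of `∫ ∂ᵢ f` enter, so
the computation takes place in a commutative algebra with commuting derivations and a linear
functional `I` that kills spatial derivatives; the equations are needed only weakly, as
`I (f * defect) = 0` for all `f`. For smooth periodic functions, `I` is the integral over the cell
at a single time `t`.
-/

/-- Commuting derivations `∂ₜ` and `∂ᵢ` of a commutative algebra `A`, to be thought of as an algebra
of functions of time and space. -/
structure SpaceTimeCalculus (𝕜 A ι : Type*) [CommRing 𝕜] [CommRing A] [Algebra 𝕜 A] where
  dt : Derivation 𝕜 A A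
  dx : ι → Derivation 𝕜 A A
  dt_dx : ∀ i f, dt (dx i f) = dx i (dt f)
  dx_comm : ∀ i j f, dx i (dx j f) = dx j (dx i f)

namespace SpaceTimeCalculus

section Ring

variable {𝕜 A ι : Type*} [CommRing 𝕜] [CommRing A] [Algebra 𝕜 A]

/-- A positive density `ρ`, encoded by its logarithm and its powers `ρ ^ a = exp (a log ρ)`; the
density itself is `pow 1`. -/
structure Density (D : SpaceTimeCalculus 𝕜 A ι) where
  log : A
  pow : 𝕜 → A
  pow_add : ∀ a b, pow (a + b) = pow a * pow b
  dt_pow : ∀ a, D.dt (pow a) = a • (pow a * D.dt log)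
  dx_pow : ∀ a i, D.dx i (pow a) = a • (pow a * D.dx i log)

variable {D : SpaceTimeCalculus 𝕜 A ι}

lemma Density.dx_pow_one (R : D.Density) (i : ι) :
    D.dx i (R.pow 1) = R.pow 1 * D.dx i R.log := by
  rw [R.dx_pow, one_smul]

/-- The effective velocity `w = u + 2ν ∇ log ρ`. -/
def Density.effectiveVelocity (R : D.Density) (u : ι → A) (ν : 𝕜) (i : ι) : A :=
  u i + (2 * ν) • D.dx i R.log

variable [Fintype ι]

section Operators

variable (D)

/-- The divergence of a vector field. -/
def div (v : ι → A) : A := ∑ j, D.dx j (v j)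

/-- The spatial Laplacian. -/
def laplacian (f : A) : A := ∑ i, D.dx i (D.dx i f)

/-- The material derivative `∂ₜ + u · ∇` along the flow of `u`. -/
def materialDeriv (u : ι → A) (f : A) : A := D.dt f + ∑ j, u j * D.dx j f

end Operators

/-- The left-hand side of the continuity equation divided by `ρ`, that is
`(∂ₜ + u · ∇) log ρ + div u`. -/
def Density.continuityDefect (R : D.Density) (u : ι → A) : A :=
  D.materialDeriv u R.log + D.div u

lemma div_mul (f : A) (v : ι → A) :
    D.div (fun j => f * v j) = f * D.div v + ∑ j, v j * D.dx j f := by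
  simp only [div, Derivation.leibniz, smul_eq_mul, Finset.sum_add_distrib, Finset.mul_sum]

lemma dt_pow_add_div_pow_mul (R : D.Density) (u : ι → A) (a : 𝕜) :
    D.dt (R.pow a) + D.div (fun j => R.pow a * u j)
      = a • (R.pow a * R.continuityDefect u) + (1 - a) • (R.pow a * D.div u) := by
  have convection : ∑ j, u j * D.dx j (R.pow a) = a • (R.pow a * ∑ j, u j * D.dx j R.log) := by
    simp only [R.dx_pow, Finset.mul_sum, Finset.smul_sum]
    exact Finset.sum_congr rfl fun j _ => by algebra
  rw [div_mul, convection, R.dt_pow, Density.continuityDefect, materialDeriv]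
  algebra

lemma dt_density_add_div (R : D.Density) (u : ι → A) :
    D.dt (R.pow 1) + D.div (fun j => R.pow 1 * u j) = R.pow 1 * R.continuityDefect u := by
  simpa using dt_pow_add_div_pow_mul R u 1

lemma dt_density_mul_add_div (R : D.Density) (u : ι → A) (f : A) :
    D.dt (R.pow 1 * f) + D.div (fun j => R.pow 1 * f * u j)
      = R.pow 1 * D.materialDeriv u f + f * (R.pow 1 * R.continuityDefect u) := by
  have product : D.div (fun j => R.pow 1 * f * u j)
      = f * D.div (fun j => R.pow 1 * u j) + R.pow 1 * ∑ j, u j * D.dx j f := by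
    simp only [mul_comm (R.pow 1) f, mul_assoc, div_mul f, Finset.mul_sum]
  rw [product, ← dt_density_add_div, Derivation.leibniz, materialDeriv, smul_eq_mul, smul_eq_mul]
  ring

lemma dx_materialDeriv (u : ι → A) (f : A) (i : ι) :
    D.dx i (D.materialDeriv u f)
      = D.materialDeriv u (D.dx i f) + ∑ j, D.dx i (u j) * D.dx j f := by
  simp only [materialDeriv, map_add, map_sum, Derivation.leibniz, smul_eq_mul,
    Finset.sum_add_distrib, D.dt_dx, D.dx_comm i]
  simp only [mul_comm, add_assoc]

lemma density_mul_materialDeriv_dx_log (R : D.Density) (u : ι → A) (i : ι) :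
    R.pow 1 * D.materialDeriv u (D.dx i R.log)
      = R.pow 1 * D.dx i (R.continuityDefect u) - D.div (fun j => R.pow 1 * D.dx i (u j)) := by
  have stretching : ∑ j, D.dx i (u j) * D.dx j (R.pow 1)
      = R.pow 1 * ∑ j, D.dx i (u j) * D.dx j R.log := by
    simp only [R.dx_pow_one, Finset.mul_sum, mul_left_comm]
  have dx_div : D.dx i (D.div u) = D.div (fun j => D.dx i (u j)) := by
    simp only [div, map_sum, D.dx_comm i]
  rw [div_mul, stretching, Density.continuityDefect, map_add, dx_materialDeriv, dx_div]
  ring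

variable {M : Type*} [AddCommGroup M] [Module 𝕜 M] {I : A →ₗ[𝕜] M}

lemma integral_div (hI : ∀ i f, I (D.dx i f) = 0) (v : ι → A) : I (D.div v) = 0 := by
  simp only [div, map_sum, hI, Finset.sum_const_zero]

lemma integral_sum_mul_dx (hI : ∀ i f, I (D.dx i f) = 0) (v : ι → A) (f : A) :
    I (∑ i, v i * D.dx i f) = -I (f * D.div v) := by
  rw [eq_neg_iff_add_eq_zero, add_comm, ← map_add, ← div_mul, integral_div hI]

lemma integral_mul_dx_continuityDefect (R : D.Density) (u : ι → A)
    (hI : ∀ i f, I (D.dx i f) = 0) (hc : ∀ f, I (f * R.continuityDefect u) = 0) (f : A) (i : ι) :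
    I (f * D.dx i (R.continuityDefect u)) = 0 := by
  have product := congrArg I ((D.dx i).leibniz f (R.continuityDefect u))
  rwa [hI, map_add, smul_eq_mul, smul_eq_mul, mul_comm _ (D.dx i f), hc, add_zero,
    eq_comm] at product

lemma integral_dt_sum_dx_sq (f : A) (hI : ∀ i f, I (D.dx i f) = 0) :
    I (D.dt (∑ i, D.dx i f ^ 2)) = -((2 : 𝕜) • I (D.laplacian f * D.dt f)) := by
  have chain_rule : D.dt (∑ i, D.dx i f ^ 2) = (2 : 𝕜) • ∑ i, D.dx i f * D.dx i (D.dt f) := by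
    simp only [map_sum, Derivation.leibniz_pow, D.dt_dx, Finset.smul_sum]
    exact Finset.sum_congr rfl fun i _ => by simp only [nsmul_eq_mul, smul_eq_mul]; algebra
  rw [chain_rule, map_smul, integral_sum_mul_dx hI, smul_neg, mul_comm, laplacian, div]

-- Testing `ρ w = ρ u + 2ν ∇ρ` against `∇Δρ` leaves `(Δρ) div (ρ w)`, and `div (ρ u) = -∂ₜρ`.
lemma integral_sum_effectiveVelocity_mul_capillaryForce (R : D.Density) (u : ι → A) (ν : 𝕜)
    (hI : ∀ i f, I (D.dx i f) = 0) (hc : ∀ f, I (f * R.continuityDefect u) = 0) :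
    (2 : 𝕜) • I (∑ i, R.effectiveVelocity u ν i * (R.pow 1 * D.dx i (D.laplacian (R.pow 1))))
      = -I (D.dt (∑ i, D.dx i (R.pow 1) ^ 2)) - (4 * ν) • I (D.laplacian (R.pow 1) ^ 2) := by
  have div_momentum : D.div (fun i => R.pow 1 * R.effectiveVelocity u ν i)
      = R.pow 1 * R.continuityDefect u - D.dt (R.pow 1) + (2 * ν) • D.laplacian (R.pow 1) := by
    rw [← dt_density_add_div]
    simp only [Density.effectiveVelocity, mul_add, mul_smul_comm, ← R.dx_pow_one, div, laplacian,
      map_add, Derivation.map_smul, Finset.sum_add_distrib, Finset.smul_sum, add_sub_cancel_left]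
  simp only [mul_left_comm _ (R.pow 1), ← mul_assoc (R.pow 1)]
  rw [integral_sum_mul_dx hI, div_momentum, integral_dt_sum_dx_sq _ hI, mul_add, mul_sub,
    ← mul_assoc, mul_smul_comm, map_add, map_sub, hc, map_smul, ← sq]
  module

lemma sum_dx_log_mul_dx_pow (R : D.Density) (a : 𝕜) :
    ∑ i, D.dx i R.log * D.dx i (R.pow a)
      = a • (R.pow (a - 2) * ∑ i, D.dx i (R.pow 1) ^ 2) := by
  have factor : R.pow a = R.pow (a - 2) * R.pow 1 ^ 2 := by
    rw [sq, ← R.pow_add, ← R.pow_add]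
    ring_nf
  simp only [R.dx_pow_one, R.dx_pow a, Finset.mul_sum, Finset.smul_sum]
  rw [factor]
  exact Finset.sum_congr rfl fun i _ => by algebra

end Ring

section Field

variable {𝕜 A ι : Type*} [Field 𝕜] [CommRing A] [Algebra 𝕜 A] {D : SpaceTimeCalculus 𝕜 A ι}

section Gradients

variable (D)

/-- The symmetric part of the velocity gradient, `(D u)ᵢⱼ = (∂ⱼ uᵢ + ∂ᵢ uⱼ) / 2`. -/
def symmGrad (u : ι → A) (i j : ι) : A := (1 / 2 : 𝕜) • (D.dx j (u i) + D.dx i (u j))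

/-- The antisymmetric part of the velocity gradient, `(A u)ᵢⱼ = (∂ⱼ uᵢ - ∂ᵢ uⱼ) / 2`. -/
def antisymmGrad (u : ι → A) (i j : ι) : A := (1 / 2 : 𝕜) • (D.dx j (u i) - D.dx i (u j))

end Gradients

lemma antisymmGrad_effectiveVelocity (R : D.Density) (u : ι → A) (ν : 𝕜) :
    D.antisymmGrad (R.effectiveVelocity u ν) = D.antisymmGrad u := by
  funext i j
  simp only [antisymmGrad, Density.effectiveVelocity, map_add, Derivation.map_smul, D.dx_comm i j,
    add_sub_add_right_eq_sub]

variable [Fintype ι]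

/-- The left-hand side of the momentum equation of the Navier–Stokes–Korteweg system. -/
def Density.momentumDefect (R : D.Density) (u : ι → A) (ν κ γ : 𝕜) (i : ι) : A :=
  D.dt (R.pow 1 * u i) + D.div (fun j => R.pow 1 * u i * u j) + D.dx i (R.pow γ)
    - (2 * ν) • D.div (fun j => R.pow 1 * D.symmGrad u i j)
    - (2 * κ ^ 2) • (R.pow 1 * D.dx i (D.laplacian (R.pow 1)))

/-- The integrand of the BD-entropy. -/
def Density.entropyDensity (R : D.Density) (u : ι → A) (ν κ γ : 𝕜) : A :=
  (1 / 2 : 𝕜) • (R.pow 1 * ∑ i, R.effectiveVelocity u ν i ^ 2)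
    + (γ - 1)⁻¹ • R.pow γ + κ ^ 2 • ∑ i, D.dx i (R.pow 1) ^ 2

/-- The integrand of the dissipation of the BD-entropy, without its factor `2ν`. -/
def Density.dissipationDensity (R : D.Density) (u : ι → A) (κ γ : 𝕜) : A :=
  R.pow 1 * ∑ i, ∑ j, D.antisymmGrad u i j ^ 2
    + γ • (R.pow (γ - 2) * ∑ i, D.dx i (R.pow 1) ^ 2)
    + (2 * κ ^ 2) • D.laplacian (R.pow 1) ^ 2

variable {M : Type*} [AddCommGroup M] [Module 𝕜 M] {I : A →ₗ[𝕜] M}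

lemma integral_dt_potentialEnergy (R : D.Density) (u : ι → A) {γ : 𝕜} (hγ : γ ≠ 1)
    (hI : ∀ i f, I (D.dx i f) = 0) (hc : ∀ f, I (f * R.continuityDefect u) = 0) :
    I (D.dt ((γ - 1)⁻¹ • R.pow γ)) = I (∑ i, u i * D.dx i (R.pow γ)) := by
  have balance := congrArg I (dt_pow_add_div_pow_mul R u γ)
  rw [map_add, map_add, map_smul, map_smul, integral_div hI, hc, add_zero, smul_zero,
    zero_add, ← neg_sub γ 1] at balance
  rw [Derivation.map_smul, map_smul, balance, integral_sum_mul_dx hI, neg_smul, smul_neg,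
    inv_smul_smul₀ (sub_ne_zero.2 hγ)]

lemma integral_sum_effectiveVelocity_mul_dx_pressure (R : D.Density) (u : ι → A) (ν : 𝕜) {γ : 𝕜}
    (hγ : γ ≠ 1) (hI : ∀ i f, I (D.dx i f) = 0) (hc : ∀ f, I (f * R.continuityDefect u) = 0) :
    I (∑ i, R.effectiveVelocity u ν i * D.dx i (R.pow γ))
      = I (D.dt ((γ - 1)⁻¹ • R.pow γ))
        + (2 * ν) • I (γ • (R.pow (γ - 2) * ∑ i, D.dx i (R.pow 1) ^ 2)) := by
  rw [integral_dt_potentialEnergy R u hγ hI hc, ← sum_dx_log_mul_dx_pow, ← map_smul, ← map_add]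
  simp only [Density.effectiveVelocity, add_mul, smul_mul_assoc, Finset.sum_add_distrib,
    Finset.smul_sum]

variable [CharZero 𝕜]

lemma sum_antisymmGrad_mul_dx (v : ι → A) :
    ∑ i, ∑ j, D.antisymmGrad v i j * D.dx j (v i) = ∑ i, ∑ j, D.antisymmGrad v i j ^ 2 := by
  have swap : ∑ i, ∑ j, D.antisymmGrad v i j * D.dx i (v j)
      = -∑ i, ∑ j, D.antisymmGrad v i j * D.dx j (v i) := by
    rw [Finset.sum_comm]
    simp only [← Finset.sum_neg_distrib, antisymmGrad]
    congr! 2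
    algebra
  have expand : ∑ i, ∑ j, D.antisymmGrad v i j ^ 2
      = (1 / 2 : 𝕜) • (∑ i, ∑ j, D.antisymmGrad v i j * D.dx j (v i)
        - ∑ i, ∑ j, D.antisymmGrad v i j * D.dx i (v j)) := by
    simp only [← Finset.sum_sub_distrib, Finset.smul_sum, antisymmGrad]
    congr! 2
    algebra
  rw [expand, swap]
  module

lemma density_mul_materialDeriv_effectiveVelocity (R : D.Density) (u : ι → A) (ν κ γ : 𝕜) (i : ι) :
    R.pow 1 * D.materialDeriv u (R.effectiveVelocity u ν i)
      = R.momentumDefect u ν κ γ i - u i * (R.pow 1 * R.continuityDefect u)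
        + (2 * ν) • (R.pow 1 * D.dx i (R.continuityDefect u))
        - D.dx i (R.pow γ) + (2 * ν) • D.div (fun j => R.pow 1 * D.antisymmGrad u i j)
        + (2 * κ ^ 2) • (R.pow 1 * D.dx i (D.laplacian (R.pow 1))) := by
  have split_stress : D.div (fun j => R.pow 1 * D.antisymmGrad u i j)
      = D.div (fun j => R.pow 1 * D.symmGrad u i j) - D.div (fun j => R.pow 1 * D.dx i (u j)) := by
    simp only [div, ← Finset.sum_sub_distrib, ← map_sub, symmGrad, antisymmGrad]
    congr! 2
    algebra
  have linearity : D.materialDeriv u (R.effectiveVelocity u ν i)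
      = D.materialDeriv u (u i) + (2 * ν) • D.materialDeriv u (D.dx i R.log) := by
    simp only [materialDeriv, Density.effectiveVelocity, map_add, Derivation.map_smul, mul_add,
      Finset.sum_add_distrib, mul_smul_comm, ← Finset.smul_sum]
    module
  rw [linearity, mul_add, mul_smul_comm, density_mul_materialDeriv_dx_log, split_stress,
    Density.momentumDefect, dt_density_mul_add_div]
  module

lemma integral_dt_kineticEnergy (R : D.Density) (u w : ι → A)
    (hI : ∀ i f, I (D.dx i f) = 0) (hc : ∀ f, I (f * R.continuityDefect u) = 0) :
    I (D.dt ((1 / 2 : 𝕜) • (R.pow 1 * ∑ i, w i ^ 2)))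
      = ∑ i, I (w i * (R.pow 1 * D.materialDeriv u (w i))) := by
  have chain_rule : R.pow 1 * D.materialDeriv u (∑ i, w i ^ 2)
      = (2 : 𝕜) • ∑ i, w i * (R.pow 1 * D.materialDeriv u (w i)) := by
    simp only [materialDeriv, map_sum, Derivation.leibniz_pow, Finset.mul_sum, mul_add,
      Finset.sum_add_distrib, Finset.smul_sum, smul_add]
    rw [Finset.sum_comm]
    congr! 2
    · simp only [nsmul_eq_mul, smul_eq_mul]; algebra
    · congr! 1
      simp only [nsmul_eq_mul, smul_eq_mul]; algebra
  have transport := congrArg I (dt_density_mul_add_div R u (∑ i, w i ^ 2))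
  rw [map_add, integral_div hI, add_zero, map_add, ← mul_assoc, hc, add_zero, chain_rule,
    map_smul] at transport
  rw [Derivation.map_smul, map_smul, transport, map_sum]
  module

lemma integral_sum_mul_div_antisymmGrad (R : D.Density) (w : ι → A)
    (hI : ∀ i f, I (D.dx i f) = 0) :
    I (∑ i, w i * D.div (fun j => R.pow 1 * D.antisymmGrad w i j))
      = -I (R.pow 1 * ∑ i, ∑ j, D.antisymmGrad w i j ^ 2) := by
  have by_parts (i : ι) : I (w i * D.div (fun j => R.pow 1 * D.antisymmGrad w i j))
      = -I (R.pow 1 * ∑ j, D.antisymmGrad w i j * D.dx j (w i)) := by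
    simp only [Finset.mul_sum, ← mul_assoc]
    rw [integral_sum_mul_dx hI, neg_neg]
  rw [map_sum, Finset.sum_congr rfl fun i _ => by_parts i, Finset.sum_neg_distrib, ← map_sum,
    ← Finset.mul_sum, sum_antisymmGrad_mul_dx]

lemma integral_effectiveVelocity_mul_materialDeriv (R : D.Density) (u : ι → A) (ν κ γ : 𝕜) (i : ι)
    (hI : ∀ i f, I (D.dx i f) = 0) (hc : ∀ f, I (f * R.continuityDefect u) = 0)
    (hm : ∀ f, I (f * R.momentumDefect u ν κ γ i) = 0) (f : A) :
    I (f * (R.pow 1 * D.materialDeriv u (R.effectiveVelocity u ν i)))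
      = -I (f * D.dx i (R.pow γ))
        + (2 * ν) • I (f * D.div (fun j => R.pow 1 * D.antisymmGrad u i j))
        + (2 * κ ^ 2) • I (f * (R.pow 1 * D.dx i (D.laplacian (R.pow 1)))) := by
  have mass := hc (f * u i * R.pow 1)
  have mass_gradient := integral_mul_dx_continuityDefect R u hI hc (f * R.pow 1) i
  rw [density_mul_materialDeriv_effectiveVelocity R u ν κ γ]
  simp only [mul_add, mul_sub, mul_smul_comm, map_add, map_sub, map_smul, hm, ← mul_assoc,
    mass, mass_gradient]
  module

theorem integral_dt_entropyDensity (R : D.Density) (u : ι → A) (ν κ : 𝕜) {γ : 𝕜} (hγ : γ ≠ 1)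
    (hI : ∀ i f, I (D.dx i f) = 0) (hc : ∀ f, I (f * R.continuityDefect u) = 0)
    (hm : ∀ i f, I (f * R.momentumDefect u ν κ γ i) = 0) :
    I (D.dt (R.entropyDensity u ν κ γ)) = -(2 * ν) • I (R.dissipationDensity u κ γ) := by
  have kinetic := integral_dt_kineticEnergy R u (R.effectiveVelocity u ν) hI hc
  have viscous := integral_sum_mul_div_antisymmGrad R (R.effectiveVelocity u ν) hI
  have pressure := integral_sum_effectiveVelocity_mul_dx_pressure R u ν hγ hI hc
  have capillary := integral_sum_effectiveVelocity_mul_capillaryForce R u ν hI hc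
  simp only [integral_effectiveVelocity_mul_materialDeriv R u ν κ γ _ hI hc (hm _),
    Finset.sum_add_distrib, Finset.sum_neg_distrib, ← Finset.smul_sum, ← map_sum] at kinetic
  rw [antisymmGrad_effectiveVelocity] at viscous
  rw [pressure, viscous] at kinetic
  simp only [Density.entropyDensity, Density.dissipationDensity, map_add, map_smul,
    Derivation.map_smul] at *
  linear_combination (norm := module) kinetic + κ ^ 2 • capillary

end Field

end SpaceTimeCalculus

open scoped ContDiff in
/-- Smooth functions on space-time which are `ℤⁿ`-periodic in space. -/
def SmoothPeriodic (n : ℕ) : Subalgebra ℝ (ℝ × (Fin n → ℝ) → ℝ) where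
  carrier := {f | ContDiff ℝ ∞ f ∧ ∀ t x (k : Fin n → ℤ), f (t, x + fun i => (k i : ℝ)) = f (t, x)}
  mul_mem' hf hg := ⟨hf.1.mul hg.1, fun t x k => congrArg₂ (· * ·) (hf.2 t x k) (hg.2 t x k)⟩
  add_mem' hf hg := ⟨hf.1.add hg.1, fun t x k => congrArg₂ (· + ·) (hf.2 t x k) (hg.2 t x k)⟩
  algebraMap_mem' _ := ⟨contDiff_const, fun _ _ _ => rfl⟩

namespace SmoothPeriodic

open scoped ContDiff

variable {n : ℕ}

/-- The element of `SmoothPeriodic n` given by a curried function of time and space. -/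
def ofPeriodic (f : ℝ → (Fin n → ℝ) → ℝ) (hf : ContDiff ℝ ∞ fun p : ℝ × (Fin n → ℝ) => f p.1 p.2)
    (hper : ∀ t x (k : Fin n → ℤ), f t (x + fun i => (k i : ℝ)) = f t x) : SmoothPeriodic n :=
  ⟨fun p => f p.1 p.2, hf, hper⟩

/-- Evaluation at a point of space-time, as a homomorphism of algebras. -/
def eval (p : ℝ × (Fin n → ℝ)) : SmoothPeriodic n →ₐ[ℝ] ℝ :=
  (Pi.evalAlgHom ℝ (fun _ => ℝ) p).comp (SmoothPeriodic n).val

lemma ext_eval {f g : SmoothPeriodic n} (h : ∀ p, eval p f = eval p g) : f = g :=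
  Subtype.ext (funext h)

lemma contDiff_eval (f : SmoothPeriodic n) : ContDiff ℝ ∞ fun p => eval p f := f.2.1

lemma differentiable_eval (f : SmoothPeriodic n) : Differentiable ℝ fun p => eval p f :=
  (contDiff_eval f).differentiable (by simp)

lemma eval_add_intCast (f : SmoothPeriodic n) (t : ℝ) (x : Fin n → ℝ) (k : Fin n → ℤ) :
    eval (t, x + fun i => (k i : ℝ)) f = eval (t, x) f :=
  f.2.2 t x k

lemma fderiv_eval_apply_mem (v : ℝ × (Fin n → ℝ)) (f : SmoothPeriodic n) :
    (fun p => fderiv ℝ (fun q => eval q f) p v) ∈ SmoothPeriodic n := by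
  refine ⟨((contDiff_eval f).fderiv_right (m := ∞) (by simp)).clm_apply contDiff_const,
    fun t x k => ?_⟩
  have periodic : (fun q => eval (q + ((0 : ℝ), fun i => (k i : ℝ))) f) = fun q => eval q f := by
    funext ⟨s, y⟩
    simpa using eval_add_intCast f s y k
  have shift := fderiv_comp_add_right (𝕜 := ℝ) (f := fun q => eval q f) (x := (t, x))
    ((0 : ℝ), fun i => (k i : ℝ))
  rw [periodic, Prod.mk_add_mk, add_zero] at shift
  exact congrArg (· v) shift.symm

/-- The derivative in a fixed direction of space-time. -/
def dirDeriv (v : ℝ × (Fin n → ℝ)) : Derivation ℝ (SmoothPeriodic n) (SmoothPeriodic n) :=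
  Derivation.mk'
    { toFun f := ⟨fun p => fderiv ℝ (fun q => eval q f) p v, fderiv_eval_apply_mem v f⟩
      map_add' f g := Subtype.ext <| funext fun p => congrArg (· v)
        (fderiv_add (differentiable_eval f p) (differentiable_eval g p))
      map_smul' r f := Subtype.ext <| funext fun p => congrArg (· v)
        (fderiv_const_smul (differentiable_eval f p) r) }
    fun f g => Subtype.ext <| funext fun p => congrArg (· v)
      (fderiv_mul (differentiable_eval f p) (differentiable_eval g p))

lemma eval_dirDeriv (v p : ℝ × (Fin n → ℝ)) (f : SmoothPeriodic n) :
    eval p (dirDeriv v f) = fderiv ℝ (fun q => eval q f) p v :=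
  rfl

lemma eval_dirDeriv_dirDeriv (v w p : ℝ × (Fin n → ℝ)) (f : SmoothPeriodic n) :
    eval p (dirDeriv v (dirDeriv w f)) = fderiv ℝ (fderiv ℝ fun q => eval q f) p v w := by
  have differentiable_fderiv : DifferentiableAt ℝ (fderiv ℝ fun q => eval q f) p :=
    ((contDiff_eval f).fderiv_right (m := ∞) (by simp)).differentiable (by simp) p
  simp only [eval_dirDeriv]
  rw [fderiv_clm_apply differentiable_fderiv (differentiableAt_const w)]
  simp

lemma dirDeriv_comm (v w : ℝ × (Fin n → ℝ)) (f : SmoothPeriodic n) :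
    dirDeriv v (dirDeriv w f) = dirDeriv w (dirDeriv v f) := by
  refine ext_eval fun p => ?_
  rw [eval_dirDeriv_dirDeriv, eval_dirDeriv_dirDeriv]
  exact (contDiff_eval f).contDiffAt.isSymmSndFDerivAt
    (by rw [minSmoothness_of_isRCLikeNormedField]; exact WithTop.coe_le_coe.2 le_top) v w

/-- The time derivative and the partial derivatives in space. -/
def calculus (n : ℕ) : SpaceTimeCalculus ℝ (SmoothPeriodic n) (Fin n) where
  dt := dirDeriv (1, 0)
  dx i := dirDeriv (0, Pi.single i 1)
  dt_dx _ := dirDeriv_comm _ _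
  dx_comm _ _ := dirDeriv_comm _ _

lemma hasDerivAt_eval (f : SmoothPeriodic n) (t : ℝ) (x : Fin n → ℝ) :
    HasDerivAt (fun s => eval (s, x) f) (eval (t, x) ((calculus n).dt f)) t :=
  ((differentiable_eval f (t, x)).hasFDerivAt.comp t
    (hasFDerivAt_prodMk_left (𝕜 := ℝ) t x)).hasDerivAt

lemma hasFDerivAt_eval (f : SmoothPeriodic n) (t : ℝ) (x : Fin n → ℝ) :
    HasFDerivAt (fun y => eval (t, y) f)
      ((fderiv ℝ (fun q => eval q f) (t, x)).comp (ContinuousLinearMap.inr ℝ ℝ (Fin n → ℝ))) x :=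
  (differentiable_eval f (t, x)).hasFDerivAt.comp x (hasFDerivAt_prodMk_right t x)

lemma eval_dx (f : SmoothPeriodic n) (t : ℝ) (x : Fin n → ℝ) (i : Fin n) :
    eval (t, x) ((calculus n).dx i f) = fderiv ℝ (fun y => eval (t, y) f) x (Pi.single i 1) := by
  rw [(hasFDerivAt_eval f t x).fderiv]
  rfl

/-- The function `exp (a L)`, that is `ρ ^ a` when `L = log ρ`. -/
def expMul (a : ℝ) (L : SmoothPeriodic n) : SmoothPeriodic n :=
  ⟨fun p => Real.exp (a * eval p L), (contDiff_const.mul (contDiff_eval L)).exp,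
    fun t x k => congrArg (fun r => Real.exp (a * r)) (eval_add_intCast L t x k)⟩

lemma eval_expMul (a : ℝ) (L : SmoothPeriodic n) (p : ℝ × (Fin n → ℝ)) :
    eval p (expMul a L) = Real.exp (a * eval p L) :=
  rfl

lemma dirDeriv_expMul (v : ℝ × (Fin n → ℝ)) (a : ℝ) (L : SmoothPeriodic n) :
    dirDeriv v (expMul a L) = a • (expMul a L * dirDeriv v L) := by
  refine ext_eval fun p => ?_
  simp only [map_smul, map_mul, eval_dirDeriv, eval_expMul]
  rw [((differentiable_eval L p).hasFDerivAt.const_mul a).exp.fderiv]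
  simp only [smul_apply, smul_eq_mul]
  ring

/-- The positive density with logarithm `L`. -/
def density (L : SmoothPeriodic n) : (calculus n).Density where
  log := L
  pow a := expMul a L
  pow_add a b := ext_eval fun p => by simp only [map_mul, eval_expMul, add_mul, Real.exp_add]
  dt_pow a := dirDeriv_expMul _ a L
  dx_pow a _ := dirDeriv_expMul _ a L

lemma integrableOn_eval (f : SmoothPeriodic n) (t : ℝ) :
    IntegrableOn (fun x => eval (t, x) f) (Set.Icc 0 1) :=
  ((contDiff_eval f).continuous.comp (Continuous.prodMk_right t)).continuousOn.integrableOn_compact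
    isCompact_Icc

/-- The integral over the periodicity cell at time `t`. -/
def cellIntegral (t : ℝ) : SmoothPeriodic n →ₗ[ℝ] ℝ where
  toFun f := ∫ x in Set.Icc 0 1, eval (t, x) f
  map_add' f g := by
    simp only [map_add]
    exact integral_add (integrableOn_eval f t) (integrableOn_eval g t)
  map_smul' r f := by
    simp only [map_smul, smul_eq_mul, integral_const_mul, RingHom.id_apply]

lemma cellIntegral_apply (t : ℝ) (f : SmoothPeriodic n) :
    cellIntegral t f = ∫ x in Set.Icc 0 1, eval (t, x) f :=
  rfl

lemma cellIntegral_mul_eq_zero {t : ℝ} {g : SmoothPeriodic n} (hg : ∀ x, eval (t, x) g = 0)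
    (f : SmoothPeriodic n) : cellIntegral t (f * g) = 0 := by
  simp only [cellIntegral_apply, map_mul, hg, mul_zero, integral_zero]

lemma hasDerivAt_cellIntegral (f : SmoothPeriodic n) (t : ℝ) :
    HasDerivAt (fun s => cellIntegral s f) (cellIntegral t ((calculus n).dt f)) t := by
  obtain ⟨C, hC⟩ := ((isCompact_Icc (a := t - 1) (b := t + 1)).prod
    (isCompact_Icc (a := (0 : Fin n → ℝ)) (b := 1))).exists_bound_of_continuousOn
    (contDiff_eval ((calculus n).dt f)).continuous.continuousOn
  refine (hasDerivAt_integral_of_dominated_loc_of_deriv_le (bound := fun _ => C)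
    (F := fun s x => eval (s, x) f) (F' := fun s x => eval (s, x) ((calculus n).dt f))
    (Icc_mem_nhds (sub_one_lt t) (lt_add_one t)) ?_ (integrableOn_eval f t) ?_ ?_ ?_ ?_).2
  · exact .of_forall fun s => (integrableOn_eval f s).aestronglyMeasurable
  · exact (integrableOn_eval ((calculus n).dt f) t).aestronglyMeasurable
  · filter_upwards [ae_restrict_mem measurableSet_Icc] with x hx s hs
    exact hC (s, x) ⟨hs, hx⟩
  · exact (continuousOn_const (c := C)).integrableOn_compact isCompact_Icc
  · exact .of_forall fun x s _ => hasDerivAt_eval f s x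

lemma eval_insertNth_one (f : SmoothPeriodic (n + 1)) (t : ℝ) (i : Fin (n + 1)) (y : Fin n → ℝ) :
    eval (t, i.insertNth 1 y) f = eval (t, i.insertNth 0 y) f := by
  rw [← eval_add_intCast f t (i.insertNth 0 y) (Pi.single i 1)]
  congr 3
  funext j
  refine Fin.succAboveCases i ?_ (fun k => ?_) j <;> simp

lemma cellIntegral_div (v : Fin (n + 1) → SmoothPeriodic (n + 1)) (t : ℝ) :
    cellIntegral t ((calculus (n + 1)).div v) = 0 := by
  have eval_div (x : Fin (n + 1) → ℝ) : eval (t, x) ((calculus (n + 1)).div v)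
      = ∑ j, fderiv ℝ (fun y => eval (t, y) (v j)) x (Pi.single j 1) := by
    simp only [SpaceTimeCalculus.div, map_sum, eval_dx]
  have integrable := integrableOn_eval ((calculus (n + 1)).div v) t
  simp only [eval_div] at integrable
  simp only [cellIntegral_apply, eval_div]
  rw [integral_divergence_of_hasFDerivAt_off_countable' 0 1 zero_le_one
    (fun j x => eval (t, x) (v j)) _ ∅ Set.countable_empty
    (fun j x _ => (hasFDerivAt_eval (v j) t x).continuousAt.continuousWithinAt)
    (fun x _ j => (hasFDerivAt_eval (v j) t x).differentiableAt.hasFDerivAt) integrable]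
  simp only [Pi.zero_apply, Pi.one_apply, eval_insertNth_one, sub_self, Finset.sum_const_zero]

lemma cellIntegral_dx (t : ℝ) (i : Fin n) (f : SmoothPeriodic n) :
    cellIntegral t ((calculus n).dx i f) = 0 := by
  obtain _ | n := n
  · exact i.elim0
  · rw [← cellIntegral_div (Pi.single i f) t, SpaceTimeCalculus.div,
      Finset.sum_eq_single i (fun j _ hj => by rw [Pi.single_eq_of_ne hj, map_zero])
        (fun hi => (hi (Finset.mem_univ i)).elim), Pi.single_eq_same]

theorem hasDerivAt_cellIntegral_entropyDensity (R : (calculus n).Density)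
    (u : Fin n → SmoothPeriodic n) (ν κ : ℝ) {γ : ℝ} (hγ : γ ≠ 1) {t : ℝ}
    (hc : ∀ x, eval (t, x) (R.continuityDefect u) = 0)
    (hm : ∀ i x, eval (t, x) (R.momentumDefect u ν κ γ i) = 0) :
    HasDerivAt (fun s => cellIntegral s (R.entropyDensity u ν κ γ))
      (-(2 * ν) * cellIntegral t (R.dissipationDensity u κ γ)) t := by
  rw [← smul_eq_mul, ← SpaceTimeCalculus.integral_dt_entropyDensity R u ν κ hγ (cellIntegral_dx t)
    (cellIntegral_mul_eq_zero hc) fun i => cellIntegral_mul_eq_zero (hm i)]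
  exact hasDerivAt_cellIntegral _ t

end SmoothPeriodic

section Translation

open SpaceTimeCalculus SmoothPeriodic

lemma eval_dx_eq_pd (f : SmoothPeriodic 3) (t : ℝ) (x : V3) (i : Fin 3) :
    eval (t, x) ((calculus 3).dx i f) = pd i (fun y => eval (t, y) f) x :=
  eval_dx f t x i

lemma eval_dt_eq_deriv (f : SmoothPeriodic 3) (t : ℝ) (x : V3) :
    eval (t, x) ((calculus 3).dt f) = deriv (fun s => eval (s, x) f) t :=
  (hasDerivAt_eval f t x).deriv.symm

lemma eval_div_eq_vdiv (v : Fin 3 → SmoothPeriodic 3) (t : ℝ) (x : V3) :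
    eval (t, x) ((calculus 3).div v) = vdiv (fun y i => eval (t, y) (v i)) x := by
  simp only [div, map_sum, eval_dx_eq_pd, vdiv]

lemma eval_laplacian_eq_lap (f : SmoothPeriodic 3) (t : ℝ) (x : V3) :
    eval (t, x) ((calculus 3).laplacian f) = lap (fun y => eval (t, y) f) x := by
  simp only [laplacian, map_sum, eval_dx_eq_pd, lap]

lemma eval_sum_dx_sq_eq_normSq_grad (f : SmoothPeriodic 3) (t : ℝ) (x : V3) :
    eval (t, x) (∑ i, (calculus 3).dx i f ^ 2) = normSq (grad (fun y => eval (t, y) f) x) := by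
  simp only [map_sum, map_pow, eval_dx_eq_pd, normSq, grad]

lemma eval_symmGrad_eq_symJ (v : Fin 3 → SmoothPeriodic 3) (t : ℝ) (x : V3) (i j : Fin 3) :
    eval (t, x) ((calculus 3).symmGrad v i j) = symJ (fun y i => eval (t, y) (v i)) x i j := by
  simp only [symmGrad, map_smul, map_add, eval_dx_eq_pd, symJ, jacb, smul_eq_mul]
  ring

lemma eval_antisymmGrad_eq_asymJ (v : Fin 3 → SmoothPeriodic 3) (t : ℝ) (x : V3) (i j : Fin 3) :
    eval (t, x) ((calculus 3).antisymmGrad v i j) = asymJ (fun y i => eval (t, y) (v i)) x i j := by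
  simp only [antisymmGrad, map_smul, map_sub, eval_dx_eq_pd, asymJ, jacb, smul_eq_mul]
  ring

variable {ρ : ℝ → V3 → ℝ} {u : ℝ → V3 → V3} {R : (calculus 3).Density}
  {v : Fin 3 → SmoothPeriodic 3}

lemma eval_density_mul_continuityDefect (hR : ∀ t x, eval (t, x) (R.pow 1) = ρ t x)
    (hv : ∀ t x i, eval (t, x) (v i) = u t x i) (t : ℝ) (x : V3) :
    eval (t, x) (R.pow 1 * R.continuityDefect v)
      = deriv (fun s => ρ s x) t + vdiv (fun y => ρ t y • u t y) x := by
  simp only [← dt_density_add_div, map_add, eval_dt_eq_deriv, eval_div_eq_vdiv, map_mul, hR, hv]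
  rfl

lemma eval_momentumDefect (hR : ∀ a t x, eval (t, x) (R.pow a) = ρ t x ^ a)
    (hv : ∀ t x i, eval (t, x) (v i) = u t x i) (ν κ γ t : ℝ) (x : V3) (i : Fin 3) :
    eval (t, x) (R.momentumDefect v ν κ γ i)
      = ((fun i => deriv (fun s => ρ s x * u s x i) t)
        + mdiv (fun y i j => ρ t y * u t y i * u t y j) x
        + grad (fun y => ρ t y ^ γ) x
        - (2 * ν) • mdiv (fun y i j => ρ t y * symJ (u t) y i j) x
        - (2 * κ ^ 2) • (ρ t x • grad (fun y => lap (ρ t) y) x)) i := by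
  simp only [Density.momentumDefect, map_add, map_sub, map_smul, map_mul, eval_dt_eq_deriv,
    eval_div_eq_vdiv, eval_dx_eq_pd, eval_laplacian_eq_lap, eval_symmGrad_eq_symJ, hR, hv,
    Real.rpow_one]
  rfl

lemma eval_effectiveVelocity (hlog : ∀ t x, eval (t, x) R.log = Real.log (ρ t x))
    (hv : ∀ t x i, eval (t, x) (v i) = u t x i) (ν t : ℝ) (x : V3) (i : Fin 3) :
    eval (t, x) (R.effectiveVelocity v ν i)
      = (u t x + (2 * ν) • grad (fun y => Real.log (ρ t y)) x) i := by
  simp only [Density.effectiveVelocity, map_add, map_smul, eval_dx_eq_pd, hlog, hv]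
  rfl

lemma eval_entropyDensity (hR : ∀ a t x, eval (t, x) (R.pow a) = ρ t x ^ a)
    (hlog : ∀ t x, eval (t, x) R.log = Real.log (ρ t x))
    (hv : ∀ t x i, eval (t, x) (v i) = u t x i) (ν κ γ t : ℝ) (x : V3) :
    eval (t, x) (R.entropyDensity v ν κ γ)
      = (1 / 2) * ρ t x * normSq (u t x + (2 * ν) • grad (fun y => Real.log (ρ t y)) x)
        + ρ t x ^ γ / (γ - 1) + κ ^ 2 * normSq (grad (ρ t) x) := by
  have kinetic : eval (t, x) (∑ i, R.effectiveVelocity v ν i ^ 2)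
      = normSq (u t x + (2 * ν) • grad (fun y => Real.log (ρ t y)) x) := by
    simp only [map_sum, map_pow, eval_effectiveVelocity hlog hv, normSq]
  have capillary : eval (t, x) (∑ i, (calculus 3).dx i (R.pow 1) ^ 2)
      = normSq (grad (ρ t) x) := by
    simp only [eval_sum_dx_sq_eq_normSq_grad, hR, Real.rpow_one]
  rw [Density.entropyDensity, map_add, map_add, map_smul, map_smul, map_smul, map_mul, kinetic,
    capillary, hR, hR, Real.rpow_one]
  simp only [smul_eq_mul]
  ring

lemma eval_dissipationDensity (hR : ∀ a t x, eval (t, x) (R.pow a) = ρ t x ^ a)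
    (hv : ∀ t x i, eval (t, x) (v i) = u t x i) (κ γ t : ℝ) (x : V3) :
    eval (t, x) (R.dissipationDensity v κ γ)
      = ρ t x * ∑ i, ∑ j, asymJ (u t) x i j ^ 2
        + γ * ρ t x ^ (γ - 2) * normSq (grad (ρ t) x) + 2 * κ ^ 2 * lap (ρ t) x ^ 2 := by
  have rotation : eval (t, x) (∑ i, ∑ j, (calculus 3).antisymmGrad v i j ^ 2)
      = ∑ i, ∑ j, asymJ (u t) x i j ^ 2 := by
    simp only [map_sum, map_pow, eval_antisymmGrad_eq_asymJ, hv]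
  have density_gradient : eval (t, x) (∑ i, (calculus 3).dx i (R.pow 1) ^ 2)
      = normSq (grad (ρ t) x) := by
    simp only [eval_sum_dx_sq_eq_normSq_grad, hR, Real.rpow_one]
  have density_laplacian : eval (t, x) ((calculus 3).laplacian (R.pow 1)) = lap (ρ t) x := by
    simp only [eval_laplacian_eq_lap, hR, Real.rpow_one]
  rw [Density.dissipationDensity, map_add, map_add, map_smul, map_smul, map_mul, map_mul, map_pow,
    rotation, density_gradient, density_laplacian, hR, hR, Real.rpow_one]
  simp only [smul_eq_mul, mul_assoc]

end Translation

open SmoothPeriodic in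
theorem BD_entropy_dissipation_general (ν κ : ℝ) {γ : ℝ} (hγ : γ ≠ 1)
    (ρ : ℝ → V3 → ℝ) (u : ℝ → V3 → V3)
    (hρ : ContDiff ℝ (⊤ : ℕ∞) (fun p : ℝ × V3 => ρ p.1 p.2))
    (hu : ContDiff ℝ (⊤ : ℕ∞) (fun p : ℝ × V3 => u p.1 p.2))
    (hρper : ∀ t x (k : Fin 3 → ℤ), ρ t (x + fun i => (k i : ℝ)) = ρ t x)
    (huper : ∀ t x (k : Fin 3 → ℤ), u t (x + fun i => (k i : ℝ)) = u t x)
    (hpos : ∀ t x, 0 < ρ t x) {t : ℝ}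
    (hcont : ∀ x, deriv (fun s => ρ s x) t + vdiv (fun y => ρ t y • u t y) x = 0)
    (hmom : ∀ x,
      (fun i => deriv (fun s => ρ s x * u s x i) t)
        + mdiv (fun y i j => ρ t y * u t y i * u t y j) x
        + grad (fun y => ρ t y ^ γ) x
        - (2 * ν) • mdiv (fun y i j => ρ t y * symJ (u t) y i j) x
        - (2 * κ ^ 2) • (ρ t x • grad (fun y => lap (ρ t) y) x)
      = 0)
    (w : ℝ → V3 → V3)
    (hw : ∀ t x, w t x = u t x + (2 * ν) • grad (fun y => Real.log (ρ t y)) x) :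
    HasDerivAt
      (fun s => ∫ x in Set.Icc (0 : V3) 1,
        ((1 / 2) * ρ s x * normSq (w s x)
          + (ρ s x) ^ γ / (γ - 1)
          + κ ^ 2 * normSq (grad (ρ s) x)))
      (-(2 * ν) * ∫ x in Set.Icc (0 : V3) 1,
          (ρ t x * ∑ i, ∑ j, (asymJ (u t) x i j) ^ 2
            + γ * (ρ t x) ^ (γ - 2) * normSq (grad (ρ t) x)
            + 2 * κ ^ 2 * (lap (ρ t) x) ^ 2)) t := by
  let L : SmoothPeriodic 3 := ofPeriodic (fun t x => Real.log (ρ t x))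
    (hρ.log fun p => (hpos p.1 p.2).ne') fun t x k => congrArg Real.log (hρper t x k)
  let v (i : Fin 3) : SmoothPeriodic 3 := ofPeriodic (fun t x => u t x i)
    (contDiff_pi.1 hu i) fun t x k => congrFun (huper t x k) i
  let R := density L
  have hlog (t : ℝ) (x : V3) : eval (t, x) R.log = Real.log (ρ t x) := rfl
  have hv (t : ℝ) (x : V3) (i : Fin 3) : eval (t, x) (v i) = u t x i := rfl
  have hR (a t : ℝ) (x : V3) : eval (t, x) (R.pow a) = ρ t x ^ a := by
    rw [Real.rpow_def_of_pos (hpos t x), mul_comm]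
    rfl
  have hR₁ (t : ℝ) (x : V3) : eval (t, x) (R.pow 1) = ρ t x := by
    rw [hR, Real.rpow_one]
  have mass_balance (x : V3) : eval (t, x) (R.continuityDefect v) = 0 := by
    have mass := eval_density_mul_continuityDefect hR₁ hv t x
    rw [hcont, map_mul, hR₁] at mass
    exact (mul_eq_zero.1 mass).resolve_left (hpos t x).ne'
  have momentum_balance (i : Fin 3) (x : V3) :
      eval (t, x) (R.momentumDefect v ν κ γ i) = 0 := by
    rw [eval_momentumDefect hR hv, hmom, Pi.zero_apply]
  simpa only [cellIntegral_apply, eval_entropyDensity hR hlog hv, ← hw,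
    eval_dissipationDensity hR hv] using
    hasDerivAt_cellIntegral_entropyDensity R v ν κ hγ mass_balance momentum_balance

/-- BD-entropy dissipation identity
`F'(t) = −2ν ∫ [ρ|Au|² + γ ρ^(γ−2)|∇ρ|² + 2κ²|Δρ|²]` for smooth periodic
solutions of the Navier–Stokes–Korteweg system, where `w = u + 2ν∇log ρ`. -/
theorem BD_entropy_dissipation
    (ν κ γ T : ℝ) (hν : 0 < ν) (hκ : 0 < κ) (hγ : 1 < γ) (hT : 0 < T)
    (ρ : ℝ → V3 → ℝ) (u : ℝ → V3 → V3)
    (hρ : ContDiff ℝ (⊤ : ℕ∞) (fun p : ℝ × V3 => ρ p.1 p.2))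
    (hu : ContDiff ℝ (⊤ : ℕ∞) (fun p : ℝ × V3 => u p.1 p.2))
    (hρper : ∀ t x (k : Fin 3 → ℤ), ρ t (x + fun i => (k i : ℝ)) = ρ t x)
    (huper : ∀ t x (k : Fin 3 → ℤ), u t (x + fun i => (k i : ℝ)) = u t x)
    (hpos : ∀ t x, 0 < ρ t x)
    (hcont : ∀ t ∈ Set.Icc (0 : ℝ) T, ∀ x,
      deriv (fun s => ρ s x) t + vdiv (fun y => ρ t y • u t y) x = 0)
    (hmom : ∀ t ∈ Set.Icc (0 : ℝ) T, ∀ x,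
      (fun i => deriv (fun s => ρ s x * u s x i) t)
        + mdiv (fun y i j => ρ t y * u t y i * u t y j) x
        + grad (fun y => ρ t y ^ γ) x
        - (2 * ν) • mdiv (fun y i j => ρ t y * symJ (u t) y i j) x
        - (2 * κ ^ 2) • (ρ t x • grad (fun y => lap (ρ t) y) x)
      = 0)
    (w : ℝ → V3 → V3)
    (hw : ∀ t x, w t x = u t x + (2 * ν) • grad (fun y => Real.log (ρ t y)) x) :
    ∀ t ∈ Set.Ioo (0 : ℝ) T,
      HasDerivAt
        (fun s => ∫ x in Set.Icc (0 : V3) 1,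
          ((1 / 2) * ρ s x * normSq (w s x)
            + (ρ s x) ^ γ / (γ - 1)
            + κ ^ 2 * normSq (grad (ρ s) x)))
        (-(2 * ν) * ∫ x in Set.Icc (0 : V3) 1,
            (ρ t x * ∑ i, ∑ j, (asymJ (u t) x i j) ^ 2
              + γ * (ρ t x) ^ (γ - 2) * normSq (grad (ρ t) x)
              + 2 * κ ^ 2 * (lap (ρ t) x) ^ 2)) t :=
  fun _ ht => BD_entropy_dissipation_general ν κ hγ.ne' ρ u hρ hu hρper huper hpos
    (hcont _ (Set.Ioo_subset_Icc_self ht)) (hmom _ (Set.Ioo_subset_Icc_self ht)) w hw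
end
end
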